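/- At every point r > 0 with r ≠ R₁, the function f'(r) := (1/2)∫_r^∞ s·exp(−(1/2)∫_r^s x·θ(x) dx) ds is differentiable, and its derivative satisfies the ordinary differential equation 2·(f')'(r) − r·θ(r)·f'(r) = −r. -/

import Mathlib

/-- The piecewise function `θ(x) = -L` for `x < R₁` and `θ(x) = κ` for `x ≥ R₁`. -/
noncomputable def theta (κ L R₁ : ℝ) : ℝ → ℝ := fun x => if x < R₁ then -L else κ

/-- `f'(r) = (1/2)∫_r^∞ s · exp(-(1/2)∫_r^s x·θ(x) dx) ds`. -/
noncomputable def fPrime (κ L R₁ : ℝ) (r : ℝ) : ℝ :=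
  (1 / 2) * ∫ s in Set.Ioi r, s * Real.exp (-(1 / 2) * ∫ x in r..s, x * theta κ L R₁ x)

/-!
The function `t ↦ ∫_t^∞ exp (-∫_t^s q) w(s) ds` solves `u' = q u - w`: fixing a base point `a < t`,
it equals `exp (∫_a^t q) · ∫_t^∞ exp (-∫_a^s q) w(s) ds`, a product of an integrating factor and a
tail of a fixed integrable function, so the product rule applies at every point where `q` and `w`
are continuous. Here `q(x) = x θ(x) / 2` and `w(s) = s`; since `q → ∞`, the weight
`exp (-∫_a^s q)` decays faster than any exponential and the tail integral converges.
-/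

open MeasureTheory Set Filter Topology Asymptotics

lemma intervalIntegrable_of_locallyIntegrable {E : Type*} [NormedAddCommGroup E] {f : ℝ → E}
    (hf : LocallyIntegrable f) (a b : ℝ) :
    IntervalIntegrable f volume a b :=
  (hf.integrableOn_isCompact isCompact_uIcc).intervalIntegrable

section IntegratingFactor

variable {E : Type*} [NormedAddCommGroup E] [NormedSpace ℝ E]

lemma hasDerivAt_integral_of_locallyIntegrable [CompleteSpace E] {f : ℝ → E}
    (hf : LocallyIntegrable f) (a : ℝ) {r : ℝ} (hfr : ContinuousAt f r) :
    HasDerivAt (fun t ↦ ∫ x in a..t, f x) (f r) r :=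
  intervalIntegral.integral_hasDerivAt_right (intervalIntegrable_of_locallyIntegrable hf a r)
    hf.aestronglyMeasurable.stronglyMeasurableAtFilter hfr

lemma hasDerivAt_integral_Ioi [CompleteSpace E] {f : ℝ → E} {a r : ℝ}
    (hf : IntegrableOn f (Ioi a)) (har : a < r) (hfr : ContinuousAt f r) :
    HasDerivAt (fun t ↦ ∫ s in Ioi t, f s) (-f r) r := by
  have hmeas : StronglyMeasurableAtFilter f (𝓝 r) :=
    AEStronglyMeasurable.stronglyMeasurableAtFilter_of_mem hf.aestronglyMeasurable
      (Ioi_mem_nhds har)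
  have hint : IntervalIntegrable f volume a r :=
    (intervalIntegrable_iff_integrableOn_Ioc_of_le har.le).2 (hf.mono_set Ioc_subset_Ioi_self)
  refine ((intervalIntegral.integral_hasDerivAt_right hint hmeas hfr).const_sub
    (∫ s in Ioi a, f s)).congr_of_eventuallyEq ?_
  filter_upwards [Ioi_mem_nhds har] with t hat
  rw [← intervalIntegral.integral_Ioi_sub_Ioi hf hat.le, sub_sub_cancel]

lemma integral_Ioi_exp_neg_integral_smul_eq {q : ℝ → ℝ} (hq : LocallyIntegrable q) (w : ℝ → E)
    (a t : ℝ) :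
    ∫ s in Ioi t, Real.exp (-∫ x in t..s, q x) • w s =
      Real.exp (∫ x in a..t, q x) • ∫ s in Ioi t, Real.exp (-∫ x in a..s, q x) • w s := by
  have hadd (s : ℝ) : (∫ x in a..t, q x) + ∫ x in t..s, q x = ∫ x in a..s, q x :=
    intervalIntegral.integral_add_adjacent_intervals
      (intervalIntegrable_of_locallyIntegrable hq a t)
      (intervalIntegrable_of_locallyIntegrable hq t s)
  rw [← integral_smul]
  congr 1 with s
  rw [smul_smul, ← Real.exp_add, ← hadd s, neg_add, add_neg_cancel_left]

theorem hasDerivAt_integral_Ioi_exp_neg_integral_smul [CompleteSpace E] {q : ℝ → ℝ} {w : ℝ → E}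
    {a r : ℝ} (hq : LocallyIntegrable q)
    (hint : IntegrableOn (fun s ↦ Real.exp (-∫ x in a..s, q x) • w s) (Ioi a)) (har : a < r)
    (hqr : ContinuousAt q r) (hwr : ContinuousAt w r) :
    HasDerivAt (fun t ↦ ∫ s in Ioi t, Real.exp (-∫ x in t..s, q x) • w s)
      (q r • (∫ s in Ioi r, Real.exp (-∫ x in r..s, q x) • w s) - w r) r := by
  have hprim : HasDerivAt (fun t ↦ ∫ x in a..t, q x) (q r) r :=
    hasDerivAt_integral_of_locallyIntegrable hq a hqr
  have htail : HasDerivAt (fun t ↦ ∫ s in Ioi t, Real.exp (-∫ x in a..s, q x) • w s)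
      (-(Real.exp (-∫ x in a..r, q x) • w r)) r :=
    hasDerivAt_integral_Ioi hint har (hprim.continuousAt.neg.rexp.smul hwr)
  have hcancel : Real.exp (∫ x in a..r, q x) • Real.exp (-∫ x in a..r, q x) • w r = w r := by
    rw [smul_smul, ← Real.exp_add, add_neg_cancel, Real.exp_zero, one_smul]
  simp only [integral_Ioi_exp_neg_integral_smul_eq hq w a]
  refine (hprim.exp.fun_smul htail).congr_deriv ?_
  rw [smul_neg, hcancel, smul_smul, mul_comm (q r), sub_eq_neg_add]

end IntegratingFactor

section Decay

variable {q : ℝ → ℝ} {c : ℝ}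

lemma isBigO_exp_neg_integral (hq : LocallyIntegrable q) (hqc : ∀ᶠ x in atTop, c ≤ q x) (a : ℝ) :
    (fun s ↦ Real.exp (-∫ x in a..s, q x)) =O[atTop] fun s ↦ Real.exp (-c * s) := by
  obtain ⟨N, hN⟩ := eventually_atTop.1 hqc
  have hii := intervalIntegrable_of_locallyIntegrable hq
  refine IsBigO.of_bound (Real.exp (c * N - ∫ x in a..N, q x)) ?_
  filter_upwards [eventually_ge_atTop N] with s hs
  have hlower : c * (s - N) ≤ ∫ x in N..s, q x := by
    calc c * (s - N) = ∫ _ in N..s, c := by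
          rw [intervalIntegral.integral_const, smul_eq_mul, mul_comm]
      _ ≤ ∫ x in N..s, q x :=
          intervalIntegral.integral_mono_on hs intervalIntegrable_const (hii N s)
            fun x hx ↦ hN x hx.1
  rw [Real.norm_of_nonneg (Real.exp_nonneg _), Real.norm_of_nonneg (Real.exp_nonneg _),
    ← Real.exp_add, Real.exp_le_exp,
    ← intervalIntegral.integral_add_adjacent_intervals (hii a N) (hii N s)]
  linarith

lemma integrableOn_Ioi_exp_neg_integral_mul {w : ℝ → ℝ} {a b : ℝ} (hq : LocallyIntegrable q)
    (hqc : ∀ᶠ x in atTop, c ≤ q x) (hw : ContinuousOn w (Ici a))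
    (hwb : w =O[atTop] fun s ↦ Real.exp (b * s)) (hbc : b < c) :
    IntegrableOn (fun s ↦ Real.exp (-∫ x in a..s, q x) * w s) (Ioi a) := by
  have hprim : Continuous fun s ↦ ∫ x in a..s, q x :=
    intervalIntegral.continuous_primitive (intervalIntegrable_of_locallyIntegrable hq) a
  refine integrable_of_isBigO_exp_neg (sub_pos.2 hbc) (hprim.neg.rexp.continuousOn.mul hw) ?_
  refine ((isBigO_exp_neg_integral hq hqc a).mul hwb).congr_right fun s ↦ ?_
  rw [← Real.exp_add]
  ring_nf

end Decay

section Theta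

variable {κ L R₁ : ℝ}

lemma theta_of_lt {x : ℝ} (hx : x < R₁) : theta κ L R₁ x = -L := if_pos hx

lemma theta_of_le {x : ℝ} (hx : R₁ ≤ x) : theta κ L R₁ x = κ := if_neg hx.not_gt

lemma continuousAt_theta {r : ℝ} (hr : r ≠ R₁) : ContinuousAt (theta κ L R₁) r := by
  rcases hr.lt_or_gt with hlt | hgt
  · exact continuousAt_const.congr <|
      (eventually_lt_nhds hlt).mono fun x hx ↦ (theta_of_lt hx).symm
  · exact continuousAt_const.congr <|
      (eventually_gt_nhds hgt).mono fun x hx ↦ (theta_of_le hx.le).symm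

lemma locallyIntegrable_theta : LocallyIntegrable (theta κ L R₁) := by
  have hmeas : Measurable (theta κ L R₁) :=
    Measurable.ite measurableSet_Iio measurable_const measurable_const
  refine (locallyIntegrable_const (max |L| |κ|)).mono hmeas.aestronglyMeasurable ?_
  refine ae_of_all _ fun x ↦ ?_
  rw [Real.norm_of_nonneg (le_max_of_le_left (abs_nonneg L)), Real.norm_eq_abs]
  rcases lt_or_ge x R₁ with hx | hx
  · simp only [theta_of_lt hx, abs_neg, le_max_left]
  · simp only [theta_of_le hx, le_max_right]

lemma tendsto_mul_theta_atTop (hκ : 0 < κ) :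
    Tendsto (fun x ↦ x * theta κ L R₁ x) atTop atTop :=
  (tendsto_id.atTop_mul_const hκ).congr' <|
    (eventually_ge_atTop R₁).mono fun x hx ↦ by simp only [theta_of_le hx, id]

lemma fPrime_eq_integral_exp_neg_integral_smul (r : ℝ) :
    fPrime κ L R₁ r =
      1 / 2 * ∫ s in Ioi r, Real.exp (-∫ x in r..s, 1 / 2 * (x * theta κ L R₁ x)) • s := by
  simp only [fPrime, intervalIntegral.integral_const_mul, smul_eq_mul, neg_mul,
    mul_comm (Real.exp _)]

end Theta

theorem fPrime_hasDerivAt_ODE_general (κ L R₁ : ℝ) (hκ : 0 < κ) (r : ℝ) (hrR : r ≠ R₁) :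
    HasDerivAt (fPrime κ L R₁) ((r * theta κ L R₁ r * fPrime κ L R₁ r - r) / 2) r := by
  let q : ℝ → ℝ := fun x ↦ 1 / 2 * (x * theta κ L R₁ x)
  have hq : LocallyIntegrable q :=
    (locallyIntegrable_theta.continuous_mul continuous_id).continuous_mul continuous_const
  have hqr : ContinuousAt q r := (continuousAt_id.mul (continuousAt_theta hrR)).const_mul _
  have hq_large : ∀ᶠ x in atTop, 2 ≤ q x :=
    ((tendsto_mul_theta_atTop hκ).const_mul_atTop one_half_pos).eventually_ge_atTop 2
  have hid : (fun s : ℝ ↦ s) =O[atTop] fun s ↦ Real.exp (1 * s) := by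
    simpa only [pow_one] using (isLittleO_pow_exp_pos_mul_atTop 1 one_pos).isBigO
  have hint : IntegrableOn (fun s ↦ Real.exp (-∫ x in (r - 1)..s, q x) • s) (Ioi (r - 1)) :=
    integrableOn_Ioi_exp_neg_integral_mul hq hq_large continuousOn_id hid one_lt_two
  have hderiv := (hasDerivAt_integral_Ioi_exp_neg_integral_smul hq hint (sub_one_lt r) hqr
    continuousAt_id).const_mul (1 / 2)
  rw [funext fPrime_eq_integral_exp_neg_integral_smul]
  refine hderiv.congr_deriv ?_
  simp only [q, smul_eq_mul]
  ring

/-- at every `r > 0` with `r ≠ R₁`, the function `f'` is differentiable,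
and its derivative satisfies `2·(f')'(r) − r·θ(r)·f'(r) = −r`. -/
theorem fPrime_hasDerivAt_ODE (κ L R₁ : ℝ) (hκ : 0 < κ) (hL : 0 < L) (hR₁ : 0 ≤ R₁)
    (r : ℝ) (hr : 0 < r) (hrR : r ≠ R₁) :
    ∃ y : ℝ, HasDerivAt (fPrime κ L R₁) y r ∧
      2 * y - r * theta κ L R₁ r * fPrime κ L R₁ r = -r :=
  ⟨_, fPrime_hasDerivAt_ODE_general κ L R₁ hκ r hrR, by ring⟩
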